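/- Let a < b, let f : [a,b] → ℝ be pseudo-convex on [a,b] with g∘f integrable on [a,b], and let 0 ≤ λ ≤ 1. Define L(λ) := (1/2) ⊙ (f(λb + (1−λ)a) ⊕ λ ⊙ f(a) ⊕ (1−λ) ⊙ f(b)). Then (1/(b−a)) ⊙ ∫^⊕_{[a,b]} f(x) ⊗ dx ≤_g L(λ) ≤_g (1/2) ⊙ (f(a) ⊕ f(b)); equivalently, (1/(b−a))·∫_a^b g(f(x)) dx ≤ (1/2)·(g(f(λb+(1−λ)a)) + λ·g(f(a)) + (1−λ)·g(f(b))) ≤ (g(f(a)) + g(f(b)))/2. -/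

import Mathlib

open MeasureTheory intervalIntegral

noncomputable section

/-- pseudo-addition: `x ⊕ y = g⁻¹(g x + g y)` -/
def padd (g ginv : ℝ → ℝ) (x y : ℝ) : ℝ := ginv (g x + g y)

/-- pseudo-scalar multiplication: `l ⊙ x = g⁻¹(l * g x)` -/
def psmul (g ginv : ℝ → ℝ) (l x : ℝ) : ℝ := ginv (l * g x)

/-- pseudo-order for an increasing generator: `x ≤_g y ↔ g x ≤ g y` -/
def pleInc (g : ℝ → ℝ) (x y : ℝ) : Prop := g x ≤ g y

/-- pseudo-integral: `∫^⊕_{[a,b]} f(x) ⊗ dx = g⁻¹(∫_a^b g (f x) dx)` -/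
def pint (g ginv : ℝ → ℝ) (f : ℝ → ℝ) (a b : ℝ) : ℝ :=
  ginv (∫ x in a..b, g (f x))

/-- pseudo-convexity of `f` on `[a,b]` -/
def PseudoConvexOn (g ginv : ℝ → ℝ) (a b : ℝ) (f : ℝ → ℝ) : Prop :=
  ∀ x ∈ Set.Icc a b, ∀ y ∈ Set.Icc a b, ∀ l ∈ Set.Icc (0 : ℝ) 1,
    pleInc g (f (l * x + (1 - l) * y))
      (padd g ginv (psmul g ginv l (f x)) (psmul g ginv (1 - l) (f y)))

/-!
Applying `g` turns the pseudo-operations into the ordinary ones, so the claim is about the convex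
function `h = g ∘ f`. Averaging `h x + h (a + b - x) ≤ h a + h b` over `[a, b]` gives the classical
trapezoid bound. Using that bound on both sides of the point `c = λb + (1 - λ)a` gives the first
inequality, and convexity at `c` gives the second.
-/

theorem convexOn_add_map_reflect_le {𝕜 E β : Type*} [Ring 𝕜] [PartialOrder 𝕜] [AddCommGroup E]
    [Module 𝕜 E] [AddCommMonoid β] [PartialOrder β] [IsOrderedAddMonoid β] [Module 𝕜 β]
    {s : Set E} {h : E → β} (hh : ConvexOn 𝕜 s h) {a b x : E} (ha : a ∈ s) (hb : b ∈ s)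
    (hx : x ∈ segment 𝕜 a b) : h x + h (a + b - x) ≤ h a + h b := by
  obtain ⟨p, q, hp, hq, hpq, rfl⟩ := hx
  have reflect_eq : a + b - (p • a + q • b) = q • a + p • b := by
    rw [← one_smul 𝕜 (a + b), ← hpq, add_smul, smul_add, smul_add]
    abel
  calc h (p • a + q • b) + h (a + b - (p • a + q • b))
      ≤ (p • h a + q • h b) + (q • h a + p • h b) := by
        rw [reflect_eq]
        exact add_le_add (hh.2 ha hb hp hq hpq) (hh.2 ha hb hq hp (by rwa [add_comm]))
    _ = (p + q) • h a + (p + q) • h b := by rw [add_smul, add_smul]; abel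
    _ = h a + h b := by rw [hpq, one_smul, one_smul]

section RealConvex

variable {h : ℝ → ℝ} {a b : ℝ}

theorem exists_abs_le_of_convexOn_Icc (hh : ConvexOn ℝ (Set.Icc a b) h) :
    ∃ C, ∀ x ∈ Set.Icc a b, |h x| ≤ C := by
  -- Lower bound: twice the midpoint value is at most `h x` plus the value at the reflected point.
  refine ⟨max |2 * h ((a + b) / 2) - max (h a) (h b)| |max (h a) (h b)|, fun x hx => ?_⟩
  have hab : a ≤ b := hx.1.trans hx.2
  have upper {y : ℝ} (hy : y ∈ Set.Icc a b) : h y ≤ max (h a) (h b) :=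
    hh.le_max_of_mem_Icc (Set.left_mem_Icc.2 hab) (Set.right_mem_Icc.2 hab) hy
  have hx' : a + b - x ∈ Set.Icc a b := ⟨by linarith [hx.2], by linarith [hx.1]⟩
  have midpoint_le : h ((a + b) / 2) ≤ (h x + h (a + b - x)) / 2 := by
    have midpoint_eq : (1 / 2 : ℝ) • x + (1 / 2 : ℝ) • (a + b - x) = (a + b) / 2 := by
      simp only [smul_eq_mul]; ring
    have convex_at_midpoint := hh.2 hx hx' one_half_pos.le one_half_pos.le (add_halves 1)
    rw [midpoint_eq, smul_eq_mul, smul_eq_mul] at convex_at_midpoint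
    linarith
  exact abs_le_max_abs_abs (by linarith [upper hx']) (upper hx)

theorem integrableOn_Icc_of_convexOn (hh : ConvexOn ℝ (Set.Icc a b) h) :
    IntegrableOn h (Set.Icc a b) := by
  obtain ⟨C, hC⟩ := exists_abs_le_of_convexOn_Icc hh
  have continuousOn_Ioo : ContinuousOn h (Set.Ioo a b) := by
    simpa only [interior_Icc] using hh.continuousOn_interior
  rw [integrableOn_Icc_iff_integrableOn_Ioo]
  exact IntegrableOn.of_bound measure_Ioo_lt_top
    (continuousOn_Ioo.aestronglyMeasurable measurableSet_Ioo) C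
    (ae_restrict_of_forall_mem measurableSet_Ioo fun x hx => hC x (Set.Ioo_subset_Icc_self hx))

theorem intervalIntegrable_of_convexOn_Icc (hab : a ≤ b) (hh : ConvexOn ℝ (Set.Icc a b) h) :
    IntervalIntegrable h volume a b :=
  (intervalIntegrable_iff_integrableOn_Icc_of_le hab).2 (integrableOn_Icc_of_convexOn hh)

theorem integral_le_trapezoid_of_convexOn (hab : a ≤ b) (hh : ConvexOn ℝ (Set.Icc a b) h) :
    ∫ x in a..b, h x ≤ (b - a) * ((h a + h b) / 2) := by
  have hi : IntervalIntegrable h volume a b := intervalIntegrable_of_convexOn_Icc hab hh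
  have hi' : IntervalIntegrable (fun x => h (a + b - x)) volume a b := by
    simpa using (hi.comp_sub_left (a + b)).symm
  have integral_reflect : ∫ x in a..b, h (a + b - x) = ∫ x in a..b, h x := by
    simp [integral_comp_sub_left]
  have two_mul_le : 2 * ∫ x in a..b, h x ≤ (b - a) * (h a + h b) :=
    calc 2 * ∫ x in a..b, h x = ∫ x in a..b, (h x + h (a + b - x)) := by
          rw [integral_add hi hi', integral_reflect, two_mul]
      _ ≤ ∫ _ in a..b, (h a + h b) :=
          integral_mono_on hab (hi.add hi') intervalIntegrable_const fun x hx =>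
            convexOn_add_map_reflect_le hh (Set.left_mem_Icc.2 hab) (Set.right_mem_Icc.2 hab)
              (by rwa [segment_eq_Icc hab])
      _ = (b - a) * (h a + h b) := by rw [intervalIntegral.integral_const, smul_eq_mul]
  linarith

theorem integral_le_trapezoid_add_trapezoid_of_convexOn (hh : ConvexOn ℝ (Set.Icc a b) h) {c : ℝ}
    (hc : c ∈ Set.Icc a b) :
    ∫ x in a..b, h x ≤ (c - a) * ((h a + h c) / 2) + (b - c) * ((h c + h b) / 2) := by
  have left : ConvexOn ℝ (Set.Icc a c) h :=
    hh.subset (Set.Icc_subset_Icc_right hc.2) (convex_Icc a c)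
  have right : ConvexOn ℝ (Set.Icc c b) h :=
    hh.subset (Set.Icc_subset_Icc_left hc.1) (convex_Icc c b)
  rw [← integral_add_adjacent_intervals (intervalIntegrable_of_convexOn_Icc hc.1 left)
    (intervalIntegrable_of_convexOn_Icc hc.2 right)]
  exact add_le_add (integral_le_trapezoid_of_convexOn hc.1 left)
    (integral_le_trapezoid_of_convexOn hc.2 right)

theorem average_le_split_trapezoid_of_convexOn (hab : a < b) (hh : ConvexOn ℝ (Set.Icc a b) h)
    {l : ℝ} (hl0 : 0 ≤ l) (hl1 : l ≤ 1) :
    1 / (b - a) * ∫ x in a..b, h x ≤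
      1 / 2 * (h (l * b + (1 - l) * a) + l * h a + (1 - l) * h b) := by
  have hc : l * b + (1 - l) * a ∈ Set.Icc a b :=
    convex_Icc a b (Set.right_mem_Icc.2 hab.le) (Set.left_mem_Icc.2 hab.le) hl0
      (sub_nonneg.2 hl1) (add_sub_cancel l 1)
  rw [one_div_mul_eq_div, div_le_iff₀ (sub_pos.2 hab)]
  exact (integral_le_trapezoid_add_trapezoid_of_convexOn hh hc).trans_eq (by ring)

end RealConvex

section Generator

variable {g ginv : ℝ → ℝ}

theorem map_padd (hri : Function.RightInverse ginv g) (x y : ℝ) :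
    g (padd g ginv x y) = g x + g y :=
  hri _

theorem map_psmul (hri : Function.RightInverse ginv g) (l x : ℝ) :
    g (psmul g ginv l x) = l * g x :=
  hri _

theorem map_pint (hri : Function.RightInverse ginv g) (f : ℝ → ℝ) (a b : ℝ) :
    g (pint g ginv f a b) = ∫ x in a..b, g (f x) :=
  hri _

theorem pseudoConvexOn_iff_convexOn_comp (hri : Function.RightInverse ginv g) {a b : ℝ}
    {f : ℝ → ℝ} : PseudoConvexOn g ginv a b f ↔ ConvexOn ℝ (Set.Icc a b) (g ∘ f) := by
  simp only [PseudoConvexOn, pleInc, map_padd hri, map_psmul hri]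
  refine ⟨fun hf => ⟨convex_Icc a b, fun x hx y hy p q hp hq hpq => ?_⟩,
    fun hf x hx y hy l hl => hf.2 hx hy hl.1 (sub_nonneg.2 hl.2) (add_sub_cancel l 1)⟩
  obtain rfl : q = 1 - p := eq_sub_of_add_eq' hpq
  exact hf x hx y hy p ⟨hp, sub_nonneg.1 hq⟩

end Generator

theorem pseudo_hermite_hadamard_refined_upper_general {g ginv : ℝ → ℝ}
    (hri : Function.RightInverse ginv g) {a b : ℝ} (hab : a < b) {f : ℝ → ℝ}
    (hconv : PseudoConvexOn g ginv a b f) {l : ℝ} (hl0 : 0 ≤ l) (hl1 : l ≤ 1) :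
    pleInc g (psmul g ginv (1 / (b - a)) (pint g ginv f a b))
      (psmul g ginv (1 / 2)
        (padd g ginv (padd g ginv (f (l * b + (1 - l) * a)) (psmul g ginv l (f a)))
          (psmul g ginv (1 - l) (f b)))) ∧
      pleInc g
        (psmul g ginv (1 / 2)
          (padd g ginv (padd g ginv (f (l * b + (1 - l) * a)) (psmul g ginv l (f a)))
            (psmul g ginv (1 - l) (f b))))
        (psmul g ginv (1 / 2) (padd g ginv (f a) (f b))) := by
  have hh : ConvexOn ℝ (Set.Icc a b) (g ∘ f) := (pseudoConvexOn_iff_convexOn_comp hri).1 hconv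
  simp only [pleInc, map_padd hri, map_psmul hri, map_pint hri]
  refine ⟨average_le_split_trapezoid_of_convexOn hab hh hl0 hl1, ?_⟩
  have convex_at_split : g (f (l * b + (1 - l) * a)) ≤ l * g (f b) + (1 - l) * g (f a) :=
    hh.2 (Set.right_mem_Icc.2 hab.le) (Set.left_mem_Icc.2 hab.le) hl0 (sub_nonneg.2 hl1)
      (add_sub_cancel l 1)
  linarith

/-- Refined pseudo Hermite–Hadamard inequality, upper part:
`(1/(b-a)) ⊙ ∫^⊕_{[a,b]} f ≤_g L(λ) ≤_g (1/2) ⊙ (f a ⊕ f b)` where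
`L(λ) = (1/2) ⊙ (f(λb+(1-λ)a) ⊕ λ ⊙ f a ⊕ (1-λ) ⊙ f b)`. -/
theorem pseudo_hermite_hadamard_refined_upper (g ginv : ℝ → ℝ)
    (hmono : StrictMono g) (hcont : Continuous g)
    (hli : Function.LeftInverse ginv g) (hri : Function.RightInverse ginv g)
    (a b : ℝ) (hab : a < b) (f : ℝ → ℝ)
    (hconv : PseudoConvexOn g ginv a b f)
    (hint : IntervalIntegrable (fun x => g (f x)) volume a b)
    (l : ℝ) (hl0 : 0 ≤ l) (hl1 : l ≤ 1) :
    pleInc g (psmul g ginv (1 / (b - a)) (pint g ginv f a b))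
      (psmul g ginv (1 / 2)
        (padd g ginv (padd g ginv (f (l * b + (1 - l) * a)) (psmul g ginv l (f a)))
          (psmul g ginv (1 - l) (f b)))) ∧
      pleInc g
        (psmul g ginv (1 / 2)
          (padd g ginv (padd g ginv (f (l * b + (1 - l) * a)) (psmul g ginv l (f a)))
            (psmul g ginv (1 - l) (f b))))
        (psmul g ginv (1 / 2) (padd g ginv (f a) (f b))) :=
  pseudo_hermite_hadamard_refined_upper_general hri hab hconv hl0 hl1
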